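/- Let x₀ ∈ X_S and let k be an index with x₀_k ≠ 0. Then among measurable component estimators f : ℝ^N → ℝ that are unbiased for the k-th component (for every x ∈ X_S, f is P_x-integrable with ∫ f(y) dP_x(y) = x_k) and square-integrable with respect to P_{x₀}, the minimum of the componentwise MSE ∫ (f(y) − x₀_k)² dP_{x₀}(y) equals σ²: every such f satisfies ∫ (f(y) − x₀_k)² dP_{x₀}(y) ≥ σ², and the choice f(y) = y_k satisfies the unbiasedness constraint and attains the value σ². -/

import Mathlib

open MeasureTheory ProbabilityTheory Filter
open scoped ENNReal Classical

/-- The product Gaussian measure `P_x` on `ℝ^N` with mean `x` and variance `σ²` per coordinate. -/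
noncomputable def gaussP (N : ℕ) (σ : ℝ) (x : Fin N → ℝ) : Measure (Fin N → ℝ) :=
  MeasureTheory.Measure.pi fun i => gaussianReal (x i) (Real.toNNReal (σ ^ 2))

/-- The support of `x`: indices with nonzero entries. Its cardinality is `‖x‖₀`. -/
noncomputable def supp {N : ℕ} (x : Fin N → ℝ) : Finset (Fin N) :=
  Finset.univ.filter fun i => x i ≠ 0

/-- The sparse parameter set `X_S = {x : ‖x‖₀ ≤ S}`. -/
def sparseSet (N S : ℕ) : Set (Fin N → ℝ) := {x | (supp x).card ≤ S}

/-- An estimator is unbiased if each component is `P_x`-integrable with mean `x i`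
for every `x ∈ X_S`. -/
def Unbiased (N S : ℕ) (σ : ℝ) (est : (Fin N → ℝ) → Fin N → ℝ) : Prop :=
  ∀ x ∈ sparseSet N S, ∀ i,
    Integrable (fun y => est y i) (gaussP N σ x) ∧
    (∫ y, est y i ∂gaussP N σ x) = x i

/-- The MSE `ε(x; x̂) = ∫ ‖x̂(y) − x‖₂² dP_x(y)`, as an extended real. -/
noncomputable def MSE (N : ℕ) (σ : ℝ) (est : (Fin N → ℝ) → Fin N → ℝ)
    (x : Fin N → ℝ) : ℝ≥0∞ :=
  ∫⁻ y, ENNReal.ofReal (∑ i, (est y i - x i) ^ 2) ∂gaussP N σ x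

/-!
Tilting a law under which `X` is Gaussian with variance `v` by `exp (t * X)` shifts the mean of `X`
by `v * t`. The change of an expectation `E f` under the tilt is the covariance of `f` with the
likelihood ratio, whose variance is `exp (v * t ^ 2) - 1`, so Cauchy–Schwarz bounds the squared
change by `Var f * (exp (v * t ^ 2) - 1)`. Dividing by `t ^ 2` and letting `t → 0` gives a
Cramér–Rao inequality. Since `k` is in the support of `x₀`, changing the `k`-th entry of `x₀` never
leaves `X_S`, so along this line an unbiased estimator of that entry has mean with derivative `1`.
-/

open scoped NNReal Topology

section Covariance

variable {Ω : Type*} {mΩ : MeasurableSpace Ω} {P : Measure Ω} {f g u : Ω → ℝ}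

lemma sq_covariance_le_variance_mul_variance [IsFiniteMeasure P] (hf : MemLp f 2 P)
    (hg : MemLp g 2 P) : cov[f, g; P] ^ 2 ≤ Var[f; P] * Var[g; P] := by
  have variance_nonneg_quadratic (c : ℝ) :
      0 ≤ Var[g; P] * (c * c) + 2 * cov[f, g; P] * c + Var[f; P] := by
    calc 0 ≤ Var[f + c • g; P] := variance_nonneg _ _
      _ = Var[g; P] * (c * c) + 2 * cov[f, g; P] * c + Var[f; P] := by
        rw [variance_add hf (hg.const_smul c), covariance_smul_right, variance_smul]
        ring
  have hdiscrim := discrim_le_zero variance_nonneg_quadratic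
  rw [discrim] at hdiscrim
  linarith

lemma integral_tilted_sub_integral_eq_covariance_div [IsProbabilityMeasure P] (hf : MemLp f 2 P)
    (hu : MemLp (fun ω ↦ Real.exp (u ω)) 2 P) :
    ∫ ω, f ω ∂P.tilted u - ∫ ω, f ω ∂P =
      cov[f, fun ω ↦ Real.exp (u ω); P] / ∫ ω, Real.exp (u ω) ∂P := by
  have hpos : 0 < ∫ ω, Real.exp (u ω) ∂P := integral_exp_pos (hu.integrable one_le_two)
  have htilted : ∫ ω, f ω ∂P.tilted u =
      (∫ ω, f ω * Real.exp (u ω) ∂P) / ∫ ω, Real.exp (u ω) ∂P := by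
    rw [integral_tilted, ← integral_div]
    congr with ω
    rw [smul_eq_mul]
    ring
  rw [htilted, covariance_eq_sub hf hu]
  simp only [Pi.mul_apply]
  field_simp

/-- The Hammersley–Chapman–Robbins bound. -/
lemma sq_integral_tilted_sub_integral_le [IsProbabilityMeasure P] (hf : MemLp f 2 P)
    (hu : MemLp (fun ω ↦ Real.exp (u ω)) 2 P) :
    (∫ ω, f ω ∂P.tilted u - ∫ ω, f ω ∂P) ^ 2 ≤
      Var[f; P] * (Var[fun ω ↦ Real.exp (u ω); P] / (∫ ω, Real.exp (u ω) ∂P) ^ 2) := by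
  rw [integral_tilted_sub_integral_eq_covariance_div hf hu, div_pow, ← mul_div_assoc]
  gcongr
  exact sq_covariance_le_variance_mul_variance hf hu

end Covariance

lemma tendsto_exp_mul_sq_sub_one_div_sq (a : ℝ) :
    Tendsto (fun t : ℝ ↦ (Real.exp (a * t ^ 2) - 1) / t ^ 2) (𝓝[≠] 0) (𝓝 a) := by
  have hderiv : HasDerivAt (fun s : ℝ ↦ Real.exp (a * s)) a 0 := by
    simpa using ((hasDerivAt_id (0 : ℝ)).const_mul a).exp
  have hsq : Tendsto (fun t : ℝ ↦ t ^ 2) (𝓝[≠] 0) (𝓝[≠] 0) :=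
    tendsto_nhdsWithin_of_tendsto_nhds_of_eventually_within _
      (((continuous_pow 2).tendsto' 0 0 (by simp)).mono_left nhdsWithin_le_nhds)
      (eventually_mem_nhdsWithin.mono fun t ht ↦ pow_ne_zero 2 ht)
  refine (hderiv.tendsto_slope_zero.comp hsq).congr fun t ↦ ?_
  simp [div_eq_inv_mul]

section GaussianTilt

variable {Ω : Type*} {mΩ : MeasurableSpace Ω} {P : Measure Ω} {X f : Ω → ℝ} {m : ℝ} {v : ℝ≥0}

lemma tilted_mul_gaussianReal (m : ℝ) (v : ℝ≥0) (t : ℝ) :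
    (gaussianReal m v).tilted (fun z ↦ t * z) = gaussianReal (m + v * t) v := by
  rcases eq_or_ne v 0 with rfl | hv
  · have hconst : (fun z ↦ t * z) =ᵐ[Measure.dirac m] fun _ ↦ t * m := by
      filter_upwards [mem_ae_dirac_iff (measurableSet_singleton m) |>.2 rfl] with z hz
      rw [hz]
    simp [tilted_congr hconst]
  · have hv' : (v : ℝ) ≠ 0 := mod_cast hv
    have hmgf : ∫ z, Real.exp (t * z) ∂gaussianReal m v = Real.exp (m * t + v * t ^ 2 / 2) :=
      congrFun mgf_fun_id_gaussianReal t
    rw [Measure.tilted, hmgf, gaussianReal_of_var_ne_zero _ hv, gaussianReal_of_var_ne_zero _ hv,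
      ← withDensity_mul _ (measurable_gaussianPDF _ _) (by fun_prop)]
    congr with z
    rw [Pi.mul_apply, gaussianPDF, gaussianPDF, ← ENNReal.ofReal_mul (gaussianPDFReal_nonneg _ _ _),
      gaussianPDFReal, gaussianPDFReal, mul_assoc, ← Real.exp_sub, ← Real.exp_add]
    congr 3
    field_simp
    ring

lemma mgf_two_mul_of_hasLaw_gaussianReal (hX : HasLaw X (gaussianReal m v) P) (t : ℝ) :
    mgf X P (2 * t) = mgf X P t ^ 2 * Real.exp (v * t ^ 2) := by
  rw [mgf_gaussianReal hX.map_eq, mgf_gaussianReal hX.map_eq, ← Real.exp_nat_mul, ← Real.exp_add]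
  congr 1
  push_cast
  ring

lemma memLp_exp_mul_of_hasLaw_gaussianReal (hX : HasLaw X (gaussianReal m v) P) (t : ℝ) :
    MemLp (fun ω ↦ Real.exp (t * X ω)) 2 P := by
  have hmeas : AEMeasurable X P := hX.aemeasurable
  refine (memLp_two_iff_integrable_sq (by fun_prop)).2 ?_
  have hint : Integrable (fun z ↦ Real.exp (2 * t * z)) (P.map X) :=
    hX.map_eq ▸ integrable_exp_mul_gaussianReal (2 * t)
  refine (hint.comp_aemeasurable hmeas).congr (ae_of_all _ fun ω ↦ ?_)
  simp [← Real.exp_nat_mul, mul_assoc]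

lemma variance_exp_mul_of_hasLaw_gaussianReal (hX : HasLaw X (gaussianReal m v) P) (t : ℝ) :
    Var[fun ω ↦ Real.exp (t * X ω); P] = mgf X P t ^ 2 * (Real.exp (v * t ^ 2) - 1) := by
  have := hX.isProbabilityMeasure
  have hsq : ∫ ω, Real.exp (t * X ω) ^ 2 ∂P = mgf X P (2 * t) := by
    simp [mgf, ← Real.exp_nat_mul, mul_assoc]
  rw [variance_eq_sub (memLp_exp_mul_of_hasLaw_gaussianReal hX t)]
  simp only [Pi.pow_apply]
  rw [hsq, mgf_two_mul_of_hasLaw_gaussianReal hX, ← mgf]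
  ring

lemma sq_integral_tilted_mul_sub_integral_le_of_hasLaw_gaussianReal
    (hX : HasLaw X (gaussianReal m v) P) (hf : MemLp f 2 P) (t : ℝ) :
    (∫ ω, f ω ∂P.tilted (fun ω ↦ t * X ω) - ∫ ω, f ω ∂P) ^ 2 ≤
      Var[f; P] * (Real.exp (v * t ^ 2) - 1) := by
  have := hX.isProbabilityMeasure
  have hmgf : mgf X P t ≠ 0 := by
    rw [mgf_gaussianReal hX.map_eq]
    exact (Real.exp_pos _).ne'
  have hvar : Var[fun ω ↦ Real.exp (t * X ω); P] / mgf X P t ^ 2 = Real.exp (v * t ^ 2) - 1 := by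
    rw [variance_exp_mul_of_hasLaw_gaussianReal hX, mul_div_cancel_left₀ _ (pow_ne_zero 2 hmgf)]
  exact hvar ▸ sq_integral_tilted_sub_integral_le hf (memLp_exp_mul_of_hasLaw_gaussianReal hX t)

lemma sq_le_mul_variance_of_hasDerivAt_integral_tilted
    (hX : HasLaw X (gaussianReal m v) P) (hf : MemLp f 2 P) {d : ℝ}
    (hd : HasDerivAt (fun t ↦ ∫ ω, f ω ∂P.tilted (fun ω ↦ t * X ω)) d 0) :
    d ^ 2 ≤ v * Var[f; P] := by
  have := hX.isProbabilityMeasure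
  have hlower := hd.tendsto_slope_zero.pow 2
  have hupper := (tendsto_exp_mul_sq_sub_one_div_sq v).mul_const Var[f; P]
  refine le_of_tendsto_of_tendsto' hlower hupper fun t ↦ ?_
  have hbound := sq_integral_tilted_mul_sub_integral_le_of_hasLaw_gaussianReal hX hf t
  simp only [zero_add, zero_mul, tilted_const, smul_eq_mul]
  rw [mul_pow, inv_pow, ← div_eq_inv_mul, div_mul_eq_mul_div, mul_comm _ Var[f; P]]
  gcongr

end GaussianTilt

section Pi

variable {ι : Type*} [Fintype ι]

lemma pi_tilted_eq_tilted_sum {α : ι → Type*} {mα : ∀ i, MeasurableSpace (α i)}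
    (μ : ∀ i, Measure (α i)) [∀ i, SigmaFinite (μ i)] (u : ∀ i, α i → ℝ) :
    Measure.pi (fun i ↦ (μ i).tilted (u i)) = (Measure.pi μ).tilted fun x ↦ ∑ i, u i (x i) := by
  refine Measure.pi_eq fun s hs ↦ ?_
  have hdensity (x : ∀ i, α i) :
      Real.exp (∑ i, u i (x i)) / ∫ y, Real.exp (∑ i, u i (y i)) ∂Measure.pi μ =
        ∏ i, Real.exp (u i (x i)) / ∫ z, Real.exp (u i z) ∂μ i := by
    simp_rw [Real.exp_sum, integral_fintype_prod_eq_prod (fun i z ↦ Real.exp (u i z)),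
      Finset.prod_div_distrib]
  rw [tilted_apply_eq_ofReal_integral' _ (.univ_pi hs)]
  simp_rw [hdensity]
  rw [Measure.restrict_pi_pi,
    integral_fintype_prod_eq_prod (fun i z ↦ Real.exp (u i z) / ∫ z, Real.exp (u i z) ∂μ i),
    ENNReal.ofReal_prod_of_nonneg fun i _ ↦ by positivity]
  exact Finset.prod_congr rfl fun i _ ↦ (tilted_apply_eq_ofReal_integral' _ (hs i)).symm

variable [DecidableEq ι] (m : ι → ℝ) (v : ι → ℝ≥0) (k : ι)

lemma pi_gaussianReal_tilted_mul_eval (t : ℝ) :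
    (Measure.pi fun i ↦ gaussianReal (m i) (v i)).tilted (fun y ↦ t * y k) =
      Measure.pi fun i ↦ gaussianReal (Function.update m k (m k + v k * t) i) (v i) := by
  have hsum (y : ι → ℝ) : t * y k = ∑ i, (Pi.single k t : ι → ℝ) i * y i := by
    simp [Pi.single_apply]
  simp_rw [hsum]
  rw [← pi_tilted_eq_tilted_sum _ fun i z ↦ (Pi.single k t : ι → ℝ) i * z]
  congr with i : 1
  rw [tilted_mul_gaussianReal]
  rcases eq_or_ne i k with rfl | hik
  · simp
  · simp [hik]

variable {m v k}

lemma sq_mul_le_variance_of_hasDerivAt_integral_pi_gaussianReal {f : (ι → ℝ) → ℝ}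
    (hf : MemLp f 2 (Measure.pi fun i ↦ gaussianReal (m i) (v i))) {d : ℝ}
    (hd : HasDerivAt
      (fun θ ↦ ∫ y, f y ∂Measure.pi fun i ↦ gaussianReal (Function.update m k θ i) (v i))
      d (m k)) :
    d ^ 2 * v k ≤ Var[f; Measure.pi fun i ↦ gaussianReal (m i) (v i)] := by
  have hmean : HasDerivAt (fun t ↦ m k + v k * t) (v k : ℝ) 0 := by
    simpa using ((hasDerivAt_id (0 : ℝ)).const_mul (v k : ℝ)).const_add (m k)
  have hcomp := HasDerivAt.comp 0 (by simpa using hd) hmean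
  have hbound := sq_le_mul_variance_of_hasDerivAt_integral_tilted
    (measurePreserving_eval (fun i ↦ gaussianReal (m i) (v i)) k).hasLaw hf (d := d * v k)
    (by simpa only [Function.eval, pi_gaussianReal_tilted_mul_eval, Function.comp_def] using hcomp)
  rcases (v k).2.eq_or_lt with hv | hv
  · have hv0 : (v k : ℝ) = 0 := hv.symm
    rw [hv0, mul_zero]
    exact variance_nonneg _ _
  · refine le_of_mul_le_mul_left ?_ hv
    calc (v k : ℝ) * (d ^ 2 * v k) = (d * v k) ^ 2 := by ring
      _ ≤ v k * Var[f; Measure.pi fun i ↦ gaussianReal (m i) (v i)] := hbound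

lemma le_variance_of_eventually_integral_pi_gaussianReal_update_eq {f : (ι → ℝ) → ℝ}
    (hf : MemLp f 2 (Measure.pi fun i ↦ gaussianReal (m i) (v i)))
    (hmean : ∀ᶠ θ in 𝓝 (m k),
      ∫ y, f y ∂Measure.pi (fun i ↦ gaussianReal (Function.update m k θ i) (v i)) = θ) :
    v k ≤ Var[f; Measure.pi fun i ↦ gaussianReal (m i) (v i)] := by
  simpa using sq_mul_le_variance_of_hasDerivAt_integral_pi_gaussianReal hf
    ((hasDerivAt_id' (m k)).congr_of_eventuallyEq hmean)

end Pi

section SparseModel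

variable {N : ℕ}

lemma update_mem_sparseSet {S : ℕ} {x : Fin N → ℝ} {k : Fin N} (hx : x ∈ sparseSet N S)
    (hk : x k ≠ 0) (a : ℝ) :
    Function.update x k a ∈ sparseSet N S := by
  refine (Finset.card_le_card fun i hi ↦ ?_).trans hx
  rcases eq_or_ne i k with rfl | hik
  · simpa [supp] using hk
  · simpa [supp, hik] using hi

lemma hasLaw_eval_gaussP (σ : ℝ) (x : Fin N → ℝ) (k : Fin N) :
    HasLaw (fun y ↦ y k) (gaussianReal (x k) (σ ^ 2).toNNReal) (gaussP N σ x) :=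
  (measurePreserving_eval (fun i ↦ gaussianReal (x i) (σ ^ 2).toNNReal) k).hasLaw

lemma integral_eval_gaussP (σ : ℝ) (x : Fin N → ℝ) (k : Fin N) :
    ∫ y, y k ∂gaussP N σ x = x k :=
  (hasLaw_eval_gaussP σ x k).integral_eq.trans integral_id_gaussianReal

lemma integrable_eval_gaussP (σ : ℝ) (x : Fin N → ℝ) (k : Fin N) :
    Integrable (fun y ↦ y k) (gaussP N σ x) :=
  integrable_comp_eval (f := id) ((memLp_id_gaussianReal 1).integrable le_rfl)

lemma variance_eval_gaussP (σ : ℝ) (x : Fin N → ℝ) (k : Fin N) :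
    Var[fun y ↦ y k; gaussP N σ x] = σ ^ 2 := by
  rw [(hasLaw_eval_gaussP σ x k).variance_eq, variance_id_gaussianReal,
    Real.coe_toNNReal _ (sq_nonneg σ)]

lemma sq_le_variance_gaussP_of_eventually_integral_update_eq {σ : ℝ} {x : Fin N → ℝ}
    {k : Fin N} {f : (Fin N → ℝ) → ℝ}
    (hf : MemLp f 2 (gaussP N σ x))
    (hmean : ∀ᶠ θ in 𝓝 (x k), ∫ y, f y ∂gaussP N σ (Function.update x k θ) = θ) :
    σ ^ 2 ≤ Var[f; gaussP N σ x] :=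
  Real.coe_toNNReal _ (sq_nonneg σ) ▸
    le_variance_of_eventually_integral_pi_gaussianReal_update_eq hf hmean

end SparseModel

/-- For `k ∈ supp(x₀)`, the minimum componentwise MSE over component estimators unbiased
for the `k`-th component and square-integrable w.r.t. `P_{x₀}` equals `σ²`, attained
by `f(y) = y_k`. -/
theorem stmt_10 (N S : ℕ) (σ : ℝ) (hσ : 0 < σ) (hS : 1 ≤ S) (hSN : S ≤ N)
    (x₀ : Fin N → ℝ) (hx₀ : x₀ ∈ sparseSet N S) (k : Fin N) (hk : x₀ k ≠ 0) :
    (∀ f : (Fin N → ℝ) → ℝ, Measurable f →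
        (∀ x ∈ sparseSet N S,
          Integrable f (gaussP N σ x) ∧ (∫ y, f y ∂gaussP N σ x) = x k) →
        Integrable (fun y => (f y) ^ 2) (gaussP N σ x₀) →
        σ ^ 2 ≤ ∫ y, (f y - x₀ k) ^ 2 ∂gaussP N σ x₀) ∧
    (∀ x ∈ sparseSet N S,
      Integrable (fun y => y k) (gaussP N σ x) ∧ (∫ y, y k ∂gaussP N σ x) = x k) ∧
    (∫ y, (y k - x₀ k) ^ 2 ∂gaussP N σ x₀) = σ ^ 2 := by
  refine ⟨fun f hf hunbiased hsq ↦ ?_,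
    fun x _ ↦ ⟨integrable_eval_gaussP σ x k, integral_eval_gaussP σ x k⟩, ?_⟩
  · have hL2 : MemLp f 2 (gaussP N σ x₀) :=
      (memLp_two_iff_integrable_sq hf.aestronglyMeasurable).2 hsq
    have hmean (θ : ℝ) : ∫ y, f y ∂gaussP N σ (Function.update x₀ k θ) = θ := by
      simpa using (hunbiased _ (update_mem_sparseSet hx₀ hk θ)).2
    have hvariance :=
      sq_le_variance_gaussP_of_eventually_integral_update_eq hL2 (.of_forall hmean)
    rwa [variance_eq_integral hf.aemeasurable, (hunbiased x₀ hx₀).2] at hvariance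
  · rw [← variance_eval_gaussP σ x₀ k,
      variance_eq_integral (hasLaw_eval_gaussP σ x₀ k).aemeasurable, integral_eval_gaussP]
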